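/- arXiv:2006.03069 — 2 statements merged into one kernel-verified Lean document; each statement's English description precedes it below -/
import Mathlib

section
/- Let X ∈ ℂ^{nd×d} consist of n stacked Hermitian d×d blocks x_1, …, x_n. For each k, let p_k be a Frobenius-nearest point to x_k in the closed cone of positive semidefinite d×d matrices of rank at most r, and let W ⊆ [n] be a set of s indices such that ‖p_k‖_F ≥ ‖p_j‖_F for all k ∈ W and j ∉ W. Then the block matrix Y with blocks Y_k = p_k for k ∈ W and Y_k = 0 otherwise is a Frobenius-nearest point to X in the set of nd×d block matrices that have at most s nonzero d×d blocks, each of which is positive semidefinite of rank at most r. -/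
open scoped BigOperators ComplexOrder Matrix

/-- Frobenius norm of a complex matrix. -/
noncomputable def frob {α β : Type*} [Fintype α] [Fintype β]
    (X : Matrix α β ℂ) : ℝ := Real.sqrt (∑ i, ∑ j, ‖X i j‖ ^ 2)

/-- The `k`-th `d×d` block of a matrix in `ℂ^{nd×d}`. -/
def blk {n d : ℕ} (X : Matrix (Fin n × Fin d) (Fin d) ℂ) (k : Fin n) :
    Matrix (Fin d) (Fin d) ℂ := Matrix.of fun j l => X (k, j) l

/-- The closed cone of positive semidefinite `d×d` matrices of rank at most `r`. -/
def PSDr (d r : ℕ) : Set (Matrix (Fin d) (Fin d) ℂ) :=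
  {p | p.PosSemidef ∧ p.rank ≤ r}

/-- Block matrices in `ℂ^{nd×d}` with at most `s` nonzero `d×d` blocks, each
positive semidefinite of rank at most `r`. -/
def BlockSparsePSDr (n d s r : ℕ) : Set (Matrix (Fin n × Fin d) (Fin d) ℂ) :=
  {Z | {k | blk Z k ≠ 0}.ncard ≤ s ∧ ∀ k, blk Z k ∈ PSDr d r}

/-!
A nearest point `p` to `x` in a cone is in particular nearest on its own ray, so `x - p ⟂ p` and
`‖x - p‖² = ‖x‖² - ‖p‖²`. Hence a vector supported on a set `S` of blocks, with blocks in the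
cones, has squared distance at least `∑ k, ‖x k‖² - ∑ k ∈ S, ‖p k‖²` to `x`, with equality when its
blocks on `S` are the `p k`. The best support of a given size is therefore the one carrying the
largest `‖p k‖`.
-/

open Finset WithLp
open scoped RealInnerProductSpace

/-- A set closed under multiplication by nonnegative scalars. Convexity is not required, so that
cones of matrices of bounded rank are included. -/
def IsNonnegCone {E : Type*} [SMul ℝ E] (C : Set E) : Prop :=
  ∀ ⦃t : ℝ⦄, 0 ≤ t → ∀ ⦃q⦄, q ∈ C → t • q ∈ C

lemma IsNonnegCone.zero_mem {E : Type*} [AddCommMonoid E] [Module ℝ E] {C : Set E} {p : E}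
    (hC : IsNonnegCone C) (hp : p ∈ C) : 0 ∈ C := by
  simpa using hC le_rfl hp

/-- `p` is a metric projection of `x` onto `C`; it need not be unique, as `C` may fail to be
convex. -/
def IsNearestPoint {E : Type*} [SeminormedAddCommGroup E] (C : Set E) (x p : E) : Prop :=
  p ∈ C ∧ ∀ q ∈ C, ‖x - p‖ ≤ ‖x - q‖

section InnerProductSpace

variable {E : Type*} [NormedAddCommGroup E] [InnerProductSpace ℝ E] {C : Set E} {x p : E}

lemma IsNearestPoint.inner_sub_eq_zero (hC : IsNonnegCone C) (hp : IsNearestPoint C x p) :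
    ⟪x - p, p⟫ = 0 := by
  have hmin : IsLocalMin (fun t : ℝ => ‖x - t • p‖ ^ 2) 1 := by
    filter_upwards [Ici_mem_nhds one_pos] with t ht
    rw [one_smul]
    gcongr
    exact hp.2 _ (hC ht hp.1)
  have hderiv : HasDerivAt (fun t : ℝ => ‖x - t • p‖ ^ 2) (2 * ⟪x - p, -p⟫) 1 := by
    simpa using (((hasDerivAt_id (1 : ℝ)).smul_const p).const_sub x).norm_sq
  simpa using hmin.hasDerivAt_eq_zero hderiv

lemma IsNearestPoint.norm_sub_sq (hC : IsNonnegCone C) (hp : IsNearestPoint C x p) :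
    ‖x - p‖ ^ 2 = ‖x‖ ^ 2 - ‖p‖ ^ 2 := by
  have h := norm_add_sq_real (x - p) p
  rw [sub_add_cancel, hp.inner_sub_eq_zero hC] at h
  linarith

end InnerProductSpace

lemma sum_le_sum_of_card_le_of_forall_notMem_le {ι M : Type*} [AddCommMonoid M] [LinearOrder M]
    [IsOrderedCancelAddMonoid M] {f : ι → M} {S W : Finset ι} (hf : ∀ k ∈ W, 0 ≤ f k)
    (hcard : #S ≤ #W) (hW : ∀ k ∈ W, ∀ j ∉ W, f j ≤ f k) :
    ∑ k ∈ S, f k ≤ ∑ k ∈ W, f k := by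
  classical
  rw [← sum_sdiff_le_sum_sdiff]
  have hcard' : #(S \ W) ≤ #(W \ S) := card_sdiff_le_card_sdiff_iff.2 hcard
  obtain hempty | hne := (W \ S).eq_empty_or_nonempty
  · rw [hempty, card_empty, Nat.le_zero, card_eq_zero] at hcard'
    rw [hempty, hcard']
  · obtain ⟨m, hm, hmin⟩ := exists_min_image (W \ S) f hne
    have hmW : m ∈ W := (mem_sdiff.1 hm).1
    calc ∑ k ∈ S \ W, f k
        ≤ #(S \ W) • f m := sum_le_card_nsmul _ _ _ fun j hj => hW m hmW j (mem_sdiff.1 hj).2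
      _ ≤ #(W \ S) • f m := nsmul_le_nsmul_left (hf m hmW) hcard'
      _ ≤ ∑ k ∈ W \ S, f k := card_nsmul_le_sum _ _ _ hmin

section BlockSparse

variable {ι : Type*} {E : ι → Type*}

section Zero

variable [∀ k, Zero (E k)] {C : ∀ k, Set (E k)} {s : ℕ}

/-- The vectors of an `ℓ²` sum with at most `s` nonzero blocks, the `k`-th block lying in `C k`.
It is meant for finite `ι`, as `Set.ncard` of an infinite set is `0`. -/
def blockSparse (C : ∀ k, Set (E k)) (s : ℕ) : Set (PiLp 2 E) :=
  {z | {k | z k ≠ 0}.ncard ≤ s ∧ ∀ k, z k ∈ C k}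

lemma exists_finset_of_mem_blockSparse [Finite ι] {z : PiLp 2 E} (hz : z ∈ blockSparse C s) :
    ∃ S : Finset ι, #S ≤ s ∧ ∀ k ∉ S, z k = 0 :=
  ⟨(Set.toFinite {k | z k ≠ 0}).toFinset, by rw [← Set.ncard_eq_toFinset_card]; exact hz.1, by simp⟩

lemma toLp_piecewise_mem_blockSparse [DecidableEq ι] {p : ∀ k, E k} {W : Finset ι}
    (hp : ∀ k, p k ∈ C k) (hzero : ∀ k, 0 ∈ C k) :
    toLp 2 (W.piecewise p 0) ∈ blockSparse C #W := by
  have hsupp : {k | W.piecewise p 0 k ≠ 0} ⊆ (W : Set ι) := fun k hk =>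
    by_contra fun hkW => hk (W.piecewise_eq_of_notMem p 0 hkW)
  exact ⟨(Set.ncard_le_ncard hsupp).trans_eq (Set.ncard_coe_finset W), fun k =>
    W.piecewise_cases p 0 (· ∈ C k) (hp k) (hzero k)⟩

end Zero

variable [Fintype ι] [DecidableEq ι] [∀ k, NormedAddCommGroup (E k)]
  {C : ∀ k, Set (E k)} {x z : PiLp 2 E} {p : ∀ k, E k} {S W : Finset ι}

lemma norm_sub_toLp_piecewise_le (hp : ∀ k, IsNearestPoint (C k) (x k) (p k))
    (hz : ∀ k, z k ∈ C k) (hzS : ∀ k ∉ S, z k = 0) :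
    ‖x - toLp 2 (S.piecewise p 0)‖ ≤ ‖x - z‖ := by
  rw [PiLp.norm_eq_of_L2, PiLp.norm_eq_of_L2]
  gcongr with k
  by_cases hk : k ∈ S
  · simpa [hk] using (hp k).2 _ (hz k)
  · simp [hk, hzS k hk]

variable [∀ k, InnerProductSpace ℝ (E k)]

lemma norm_sub_toLp_piecewise_sq (hC : ∀ k, IsNonnegCone (C k))
    (hp : ∀ k, IsNearestPoint (C k) (x k) (p k)) :
    ‖x - toLp 2 (S.piecewise p 0)‖ ^ 2 = ‖x‖ ^ 2 - ∑ k ∈ S, ‖p k‖ ^ 2 := by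
  rw [PiLp.norm_sq_eq_of_L2, PiLp.norm_sq_eq_of_L2, ← Fintype.sum_ite_mem S, ← sum_sub_distrib]
  refine sum_congr rfl fun k _ => ?_
  by_cases hk : k ∈ S
  · simpa [hk] using (hp k).norm_sub_sq (hC k)
  · simp [hk]

theorem hierarchical_thresholding_is_projection_general (hC : ∀ k, IsNonnegCone (C k))
    (hp : ∀ k, IsNearestPoint (C k) (x k) (p k)) (hW : ∀ k ∈ W, ∀ j ∉ W, ‖p j‖ ≤ ‖p k‖) :
    IsNearestPoint (blockSparse C #W) x (toLp 2 (W.piecewise p 0)) := by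
  refine ⟨toLp_piecewise_mem_blockSparse (fun k => (hp k).1)
    fun k => (hC k).zero_mem (hp k).1, fun z hz => ?_⟩
  obtain ⟨S, hScard, hzS⟩ := exists_finset_of_mem_blockSparse hz
  have hsum : ∑ k ∈ S, ‖p k‖ ^ 2 ≤ ∑ k ∈ W, ‖p k‖ ^ 2 :=
    sum_le_sum_of_card_le_of_forall_notMem_le (fun _ _ => by positivity) hScard
      fun k hk j hj => by gcongr; exact hW k hk j hj
  calc ‖x - toLp 2 (W.piecewise p 0)‖
      ≤ ‖x - toLp 2 (S.piecewise p 0)‖ := by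
        rw [← sq_le_sq₀ (norm_nonneg _) (norm_nonneg _), norm_sub_toLp_piecewise_sq hC hp,
          norm_sub_toLp_piecewise_sq hC hp]
        gcongr
    _ ≤ ‖x - z‖ := norm_sub_toLp_piecewise_le hp hz.2 hzS

end BlockSparse

lemma isNonnegCone_PSDr {d r : ℕ} : IsNonnegCone (PSDr d r) := by
  rintro t ht q ⟨hpos, hrank⟩
  refine ⟨hpos.smul ht, ?_⟩
  calc (t • q).rank = ((t • (1 : Matrix (Fin d) (Fin d) ℂ)) * q).rank := by simp
    _ ≤ q.rank := Matrix.rank_mul_le_right _ _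
    _ ≤ r := hrank

open scoped Matrix.Norms.Frobenius

lemma frob_eq_norm {α β : Type*} [Fintype α] [Fintype β] (X : Matrix α β ℂ) : frob X = ‖X‖ := by
  simp [frob, Matrix.frobenius_norm_def, Real.sqrt_eq_rpow]

lemma isNearestPoint_iff_frob {α β : Type*} [Fintype α] [Fintype β] {C : Set (Matrix α β ℂ)}
    {x p : Matrix α β ℂ} :
    IsNearestPoint C x p ↔ p ∈ C ∧ ∀ q ∈ C, frob (x - p) ≤ frob (x - q) := by
  simp only [IsNearestPoint, frob_eq_norm]

/-- The real part of the Hilbert–Schmidt inner product `Tr(X†Y)`, inducing the Frobenius norm. -/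
noncomputable abbrev frobeniusInnerProductSpace {α β : Type*} [Fintype α] [Fintype β] :
    InnerProductSpace ℝ (Matrix α β ℂ) where
  inner X Y := (Xᴴ * Y).trace.re
  norm_sq_eq_re_inner X := by
    rw [← frob_eq_norm, frob, Real.sq_sqrt (by positivity), sum_comm]
    simp [Matrix.trace, Matrix.mul_apply, Complex.sq_norm, Complex.normSq_apply]
  conj_inner_symm X Y := by
    rw [← Complex.conj_re, ← Complex.star_def, ← Matrix.trace_conjTranspose]
    simp
  add_left X Y Z := by simp [Matrix.add_mul]
  smul_left X Y t := by simp

attribute [local instance] frobeniusInnerProductSpace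

lemma norm_toLp_blk_sub {n d : ℕ} (X Y : Matrix (Fin n × Fin d) (Fin d) ℂ) :
    ‖toLp 2 (blk X) - toLp 2 (blk Y)‖ = frob (X - Y) := by
  rw [PiLp.norm_eq_of_L2, frob, Fintype.sum_prod_type]
  congr! with k
  rw [PiLp.sub_apply, ← frob_eq_norm, frob, Real.sq_sqrt (by positivity)]
  rfl

lemma IsNearestPoint.mem_and_frob_sub_le {n d s r : ℕ}
    {X Y : Matrix (Fin n × Fin d) (Fin d) ℂ}
    (h : IsNearestPoint (blockSparse (fun _ => PSDr d r) s) (toLp 2 (blk X)) (toLp 2 (blk Y))) :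
    Y ∈ BlockSparsePSDr n d s r ∧
      ∀ Z ∈ BlockSparsePSDr n d s r, frob (X - Y) ≤ frob (X - Z) := by
  refine ⟨h.1, fun Z hZ => ?_⟩
  rw [← norm_toLp_blk_sub, ← norm_toLp_blk_sub]
  exact h.2 (toLp 2 (blk Z)) hZ

/-- **Correctness of hierarchical thresholding (Algorithm 1).**
Let `X` have Hermitian blocks `x₁, …, xₙ`, let `p k` be a Frobenius-nearest
point to `x k` in the PSD rank-`≤ r` cone, and let `W` be a set of `s` indices
carrying the blocks with largest `‖p k‖_F`. Then the block matrix `Y` with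
`Y_k = p k` for `k ∈ W` and `Y_k = 0` otherwise is a Frobenius-nearest point
to `X` in the set of block matrices with at most `s` nonzero PSD rank-`≤ r`
blocks. -/
theorem hierarchical_thresholding_is_projection
    (n d s r : ℕ)
    (X : Matrix (Fin n × Fin d) (Fin d) ℂ)
    (hX : ∀ k, (blk X k).IsHermitian)
    (p : Fin n → Matrix (Fin d) (Fin d) ℂ)
    (hpmem : ∀ k, p k ∈ PSDr d r)
    (hpmin : ∀ k, ∀ q ∈ PSDr d r, frob (blk X k - p k) ≤ frob (blk X k - q))
    (W : Finset (Fin n)) (hW : W.card = s)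
    (hWmax : ∀ k ∈ W, ∀ j ∉ W, frob (p j) ≤ frob (p k))
    (Y : Matrix (Fin n × Fin d) (Fin d) ℂ)
    (hY : ∀ k, blk Y k = if k ∈ W then p k else 0) :
    Y ∈ BlockSparsePSDr n d s r ∧
      ∀ Z ∈ BlockSparsePSDr n d s r, frob (X - Y) ≤ frob (X - Z) := by
  subst hW
  have hYblk : W.piecewise p 0 = blk Y := (funext hY).symm
  exact IsNearestPoint.mem_and_frob_sub_le <| hYblk ▸
    hierarchical_thresholding_is_projection_general (fun _ => isNonnegCone_PSDr)
      (fun k => isNearestPoint_iff_frob.2 ⟨hpmem k, hpmin k⟩)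
      (by simpa only [frob_eq_norm] using hWmax)
end

section
/- Let A' ∈ ℝ^{σ×n} with σ ≤ d, and let A ∈ ℝ^{d×n} be obtained by stacking a (d−σ)×n zero matrix on top of A'. Then min over v ∈ Σ^d_σ and w ∈ Σ^n_s of ‖A − v wᵀ‖_F equals min over v' ∈ ℝ^σ and w ∈ Σ^n_s of ‖A' − v' wᵀ‖_F. -/
open scoped BigOperators Matrix

/-- Frobenius norm of a real matrix. -/
noncomputable def frobR {α β : Type*} [Fintype α] [Fintype β]
    (X : Matrix α β ℝ) : ℝ := Real.sqrt (∑ i, ∑ j, (X i j) ^ 2)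

/-- `ξ` has at most `s` non-vanishing entries. -/
def SparseVec {α : Type*} (s : ℕ) (ξ : α → ℝ) : Prop :=
  {i | ξ i ≠ 0}.ncard ≤ s

/-! Writing `v = (u, v')`, the residual `A - v wᵀ` has the blocks `-u wᵀ` and `A' - v' wᵀ`. Dropping
the upper block does not increase the Frobenius norm, and `u = 0` loses nothing: it makes that
block vanish, and `(0, v')` is `σ`-sparse because `v'` has only `σ` entries. -/

section FrobeniusNorm

variable {ι κ μ : Type*} [Fintype ι] [Fintype κ] [Fintype μ]

lemma frobR_nonneg (X : Matrix κ μ ℝ) : 0 ≤ frobR X :=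
  Real.sqrt_nonneg _

lemma frobR_sq (X : Matrix κ μ ℝ) : frobR X ^ 2 = ∑ i, ∑ j, X i j ^ 2 :=
  Real.sq_sqrt <| Finset.sum_nonneg fun _ _ => Finset.sum_nonneg fun _ _ => sq_nonneg _

lemma frobR_zero : frobR (0 : Matrix κ μ ℝ) = 0 := by
  simp [frobR]

lemma frobR_fromRows (B : Matrix ι μ ℝ) (C : Matrix κ μ ℝ) :
    frobR (Matrix.fromRows B C) = √(frobR B ^ 2 + frobR C ^ 2) := by
  rw [frobR_sq, frobR_sq, frobR, Fintype.sum_sum_type]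
  rfl

lemma frobR_fromRows_zero_left (C : Matrix κ μ ℝ) :
    frobR (Matrix.fromRows (0 : Matrix ι μ ℝ) C) = frobR C := by
  rw [frobR_fromRows, frobR_zero, zero_pow two_ne_zero, zero_add, Real.sqrt_sq (frobR_nonneg C)]

lemma frobR_le_frobR_fromRows (B : Matrix ι μ ℝ) (C : Matrix κ μ ℝ) :
    frobR C ≤ frobR (Matrix.fromRows B C) := by
  rw [frobR_fromRows]
  exact Real.le_sqrt_of_sq_le (le_add_of_nonneg_left (sq_nonneg _))

end FrobeniusNorm

lemma fromRows_sub_vecMulVec_sumElim {R ι κ μ : Type*} [NonUnitalNonAssocRing R]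
    (B : Matrix ι μ R) (C : Matrix κ μ R) (u : ι → R) (v : κ → R) (w : μ → R) :
    Matrix.fromRows B C - Matrix.vecMulVec (Sum.elim u v) w =
      Matrix.fromRows (B - Matrix.vecMulVec u w) (C - Matrix.vecMulVec v w) := by
  ext (i | i) j <;> rfl

namespace SparseVec

lemma zero {α : Type*} (s : ℕ) : SparseVec s (0 : α → ℝ) := by
  simp [SparseVec]

lemma of_card_le {α : Type*} [Finite α] {s : ℕ} (hs : Nat.card α ≤ s) (ξ : α → ℝ) :
    SparseVec s ξ :=
  (Set.ncard_le_card _).trans hs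

lemma sumElim_zero_left {α β : Type*} {s : ℕ} {ξ : β → ℝ} (hξ : SparseVec s ξ) :
    SparseVec s (Sum.elim (0 : α → ℝ) ξ) := by
  have support_eq : {i | Sum.elim (0 : α → ℝ) ξ i ≠ 0} = Sum.inr '' {i | ξ i ≠ 0} := by
    ext (i | i) <;> simp
  rw [SparseVec, support_eq, Set.ncard_image_of_injective _ Sum.inr_injective]
  exact hξ

end SparseVec

theorem sparse_factor_reduction_general {ι κ μ : Type*} [Fintype ι] [Fintype κ] [Fintype μ]
    {r : ℕ} (hr : Nat.card κ ≤ r) (C : Matrix κ μ ℝ) {W : Set (μ → ℝ)} (hW : W.Nonempty) :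
    IsGLB {t : ℝ | ∃ v : ι ⊕ κ → ℝ, ∃ w : μ → ℝ, SparseVec r v ∧ w ∈ W ∧
        t = frobR (Matrix.fromRows 0 C - Matrix.vecMulVec v w)}
      (sInf {t : ℝ | ∃ v : κ → ℝ, ∃ w : μ → ℝ, w ∈ W ∧
        t = frobR (C - Matrix.vecMulVec v w)}) := by
  obtain ⟨w₀, hw₀⟩ := hW
  constructor
  · rintro _ ⟨v, w, -, hw, rfl⟩
    obtain ⟨u, v, rfl⟩ : ∃ u v', v = Sum.elim u v' := ⟨_, _, (Sum.elim_comp_inl_inr v).symm⟩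
    rw [fromRows_sub_vecMulVec_sumElim]
    refine csInf_le_of_le ⟨0, ?_⟩ ⟨v, w, hw, rfl⟩ (frobR_le_frobR_fromRows _ _)
    rintro _ ⟨_, _, _, rfl⟩
    exact frobR_nonneg _
  · refine fun b hb => le_csInf ⟨_, 0, w₀, hw₀, rfl⟩ ?_
    rintro _ ⟨v, w, hw, rfl⟩
    refine hb ⟨Sum.elim 0 v, w, (SparseVec.of_card_le hr v).sumElim_zero_left, hw, ?_⟩
    rw [fromRows_sub_vecMulVec_sumElim, Matrix.zero_vecMulVec, sub_zero, frobR_fromRows_zero_left]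

/-- **Reduction from two sparse factors to one sparse factor.**
Let `A' ∈ ℝ^{σ×n}` and let `A ∈ ℝ^{d×n}` (with `d = k + σ`, rows indexed by
`Fin k ⊕ Fin σ`) be obtained by stacking a `(d−σ)×n` zero matrix on top of
`A'`. Then the minimum of `‖A − v wᵀ‖_F` over `σ`-sparse `v ∈ ℝ^d` and
`s`-sparse `w ∈ ℝⁿ` equals the minimum of `‖A' − v' wᵀ‖_F` over arbitrary
`v' ∈ ℝ^σ` and `s`-sparse `w ∈ ℝⁿ`. -/
theorem sparse_factor_reduction
    (k σ n s : ℕ) (A' : Matrix (Fin σ) (Fin n) ℝ)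
    (A : Matrix (Fin k ⊕ Fin σ) (Fin n) ℝ)
    (hzero : ∀ (i : Fin k) (j : Fin n), A (Sum.inl i) j = 0)
    (hA' : ∀ (i : Fin σ) (j : Fin n), A (Sum.inr i) j = A' i j) :
    sInf {t : ℝ | ∃ v : (Fin k ⊕ Fin σ) → ℝ, ∃ w : Fin n → ℝ,
        SparseVec σ v ∧ SparseVec s w ∧
        t = frobR (A - Matrix.vecMulVec v w)} =
    sInf {t : ℝ | ∃ v' : Fin σ → ℝ, ∃ w : Fin n → ℝ, SparseVec s w ∧
        t = frobR (A' - Matrix.vecMulVec v' w)} := by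
  obtain rfl : A = Matrix.fromRows 0 A' := by ext (i | i) j; exacts [hzero i j, hA' i j]
  exact (sparse_factor_reduction_general (Nat.card_fin σ).le A' ⟨0, SparseVec.zero s⟩).csInf_eq
    ⟨_, 0, 0, SparseVec.zero σ, SparseVec.zero s, rfl⟩
end
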